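/- arXiv:math/0702432 — 2 statements merged into one kernel-verified Lean document; each statement's English description precedes it below -/
import Mathlib

section
/- If 0 ≤ δ and 4δ³ + 2δ² + 3δ < 1, then every nontrivial measurable set S ⊆ ℝ has a δ-exceptional point. -/
open MeasureTheory Set Filter

/-- The relative measure of `H` in the interval `(p - ε, p + ε)`,
i.e. `λ(H ∩ I_ε(p)) / (2ε)`. -/
noncomputable def relMeasure (H : Set ℝ) (p ε : ℝ) : ℝ :=
  (volume (H ∩ Ioo (p - ε) (p + ε))).toReal / (2 * ε)

/-- `p` is a `δ`-exceptional point for `S` if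
`δ ≤ liminf_{ε→0⁺} λ(S ∩ I_ε(p))/(2ε)` and `limsup_{ε→0⁺} λ(S ∩ I_ε(p))/(2ε) ≤ 1 - δ`. -/
def IsExceptionalPoint (S : Set ℝ) (δ p : ℝ) : Prop :=
  δ ≤ liminf (fun ε => relMeasure S p ε) (nhdsWithin 0 (Ioi 0)) ∧
  limsup (fun ε => relMeasure S p ε) (nhdsWithin 0 (Ioi 0)) ≤ 1 - δ

/-- A set `S ⊆ ℝ` is nontrivial if both `S` and its complement have positive measure. -/
def NontrivialSet (S : Set ℝ) : Prop := 0 < volume S ∧ 0 < volume Sᶜ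

/-!
Outside an interval `(a, b)` whose endpoints are density points of `S` and of its complement,
replace `S` by a half line. If no point is balanced at all scales, then every point is the center of
an interval that is sparse for one of the two colors, `S` and its complement, i.e. one in which that
color has density less than `δ`. By compactness the radii are bounded above and below, so a fine
grid of centers gives a chain of sparse intervals that changes color from one end to the other and
has its largest members at both ends.

At the smallest color change of the chain, the larger interval absorbs the run of smaller intervals
of the opposite color next to it. The run begins at the center of the large interval, and a greedy
covering of multiplicity at most two bounds the density of the run's color from there on by
`2δ / (1 + δ)`; as the large interval is sparse for its own color, the run ends within `reach δ`
times its radius of the center. That every interval of the run stays inside the large one, as this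
count requires, is where the cubic inequality enters. Hence the run can be deleted and the large
interval linked directly to the neighbor beyond it, so that chains could be shortened forever.
-/

open scoped Topology

/-- `Φ` is the distribution function `Φ b - Φ a = λ(S ∩ (a, b))` of some measurable set `S`,
abstracted to the two properties used: `S` and its complement both have nonnegative mass. -/
structure IsMassFunction (Φ : ℝ → ℝ) : Prop where
  monotone : Monotone Φ
  monotone_id_sub : Monotone fun t => t - Φ t

/-- The two colors are the set with distribution function `Φ` (`true`) and its complement
(`false`); `colorMass Φ c` is the distribution function of color `c`. -/
def colorMass (Φ : ℝ → ℝ) : Bool → ℝ → ℝ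
  | true, t => Φ t
  | false, t => t - Φ t

/-- The distribution function of the mirror image of a set under `t ↦ -t`. -/
def reflectMass (Φ : ℝ → ℝ) (t : ℝ) : ℝ := -Φ (-t)

lemma colorMass_not (Φ : ℝ → ℝ) (c : Bool) (t : ℝ) :
    colorMass Φ (!c) t = t - colorMass Φ c t := by
  cases c <;> simp [colorMass]

lemma colorMass_reflectMass (Φ : ℝ → ℝ) (c : Bool) (t : ℝ) :
    colorMass (reflectMass Φ) c t = -colorMass Φ c (-t) := by
  cases c <;> simp only [colorMass, reflectMass]
  ring

namespace IsMassFunction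

variable {Φ : ℝ → ℝ}

lemma sub_le_sub (hΦ : IsMassFunction Φ) {a b : ℝ} (hab : a ≤ b) : Φ b - Φ a ≤ b - a := by
  linarith [hΦ.monotone_id_sub hab]

lemma colorMass (hΦ : IsMassFunction Φ) : ∀ c, IsMassFunction (colorMass Φ c)
  | true => hΦ
  | false => ⟨hΦ.monotone_id_sub, by simpa [_root_.colorMass] using hΦ.monotone⟩

lemma reflectMass (hΦ : IsMassFunction Φ) : IsMassFunction (reflectMass Φ) where
  monotone _ _ hab := neg_le_neg (hΦ.monotone (neg_le_neg hab))
  monotone_id_sub a b hab := by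
    have := hΦ.sub_le_sub (neg_le_neg hab)
    simp only [_root_.reflectMass]
    linarith

lemma continuous (hΦ : IsMassFunction Φ) : Continuous Φ := by
  refine (LipschitzWith.of_le_add fun a b => ?_).continuous
  rw [Real.dist_eq]
  rcases le_total a b with hab | hab
  · linarith [hΦ.monotone hab, abs_nonneg (a - b)]
  · linarith [hΦ.sub_le_sub hab, le_abs_self (a - b)]

end IsMassFunction

/-- The fraction of the radius of an interval within which every chain of smaller intervals of the
opposite color starting at its center has to end. -/
noncomputable def reach (δ : ℝ) : ℝ := 2 * δ * (1 + δ) / (1 - δ)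

/-- The margin left by the cubic inequality, which is equivalent to its positivity. -/
noncomputable def slack (δ : ℝ) : ℝ := 1 - 2 * δ - 2 * δ * reach δ

section Constants

variable {δ : ℝ}

lemma lt_one_third_of_cubic (hδ : 0 < δ) (hcubic : 4 * δ ^ 3 + 2 * δ ^ 2 + 3 * δ < 1) :
    δ < 1 / 3 := by
  linarith [pow_pos hδ 2, pow_pos hδ 3]

lemma reach_mul_one_sub (hδ : δ < 1) : reach δ * (1 - δ) = 2 * δ * (1 + δ) :=
  div_mul_cancel₀ _ (sub_pos.2 hδ).ne'

lemma reach_pos (hδ : 0 < δ) (hδ₁ : δ < 1) : 0 < reach δ :=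
  div_pos (by positivity) (sub_pos.2 hδ₁)

lemma reach_lt_one (hδ : 0 < δ) (hcubic : 4 * δ ^ 3 + 2 * δ ^ 2 + 3 * δ < 1) : reach δ < 1 := by
  have := lt_one_third_of_cubic hδ hcubic
  rw [reach, div_lt_one (by linarith)]
  linarith [pow_pos hδ 3]

lemma slack_pos (hδ : 0 < δ) (hcubic : 4 * δ ^ 3 + 2 * δ ^ 2 + 3 * δ < 1) : 0 < slack δ := by
  have hδ₁ : 0 < 1 - δ := by linarith [lt_one_third_of_cubic hδ hcubic]
  have : slack δ = (1 - (4 * δ ^ 3 + 2 * δ ^ 2 + 3 * δ)) / (1 - δ) := by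
    rw [slack, reach]
    field_simp
    ring
  exact this ▸ div_pos (sub_pos.2 hcubic) hδ₁

end Constants

/-- An interval `(center - radius, center + radius)` marked with a color. -/
structure MarkedInterval where
  center : ℝ
  radius : ℝ
  radius_pos : 0 < radius
  color : Bool

namespace MarkedInterval

variable {Φ : ℝ → ℝ} {δ η : ℝ} {p q r : MarkedInterval}

/-- The left endpoint of a marked interval. -/
def left (p : MarkedInterval) : ℝ := p.center - p.radius

/-- The right endpoint of a marked interval. -/
def right (p : MarkedInterval) : ℝ := p.center + p.radius

/-- The mirror image of a marked interval under `t ↦ -t`. -/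
def reflect (p : MarkedInterval) : MarkedInterval := { p with center := -p.center }

/-- The interval witnesses that its center is not exceptional: its color has density `< δ`
in it. -/
def IsSparse (Φ : ℝ → ℝ) (δ : ℝ) (p : MarkedInterval) : Prop :=
  colorMass Φ p.color p.right - colorMass Φ p.color p.left < 2 * δ * p.radius

/-- The relation of `p` to the intervals that it can absorb: `q` is sparse, of the opposite color
and not larger than `p`. -/
structure Dominates (Φ : ℝ → ℝ) (δ : ℝ) (p q : MarkedInterval) : Prop where
  isSparse : q.IsSparse Φ δ
  color_eq : q.color = !p.color
  radius_le : q.radius ≤ p.radius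

/-- Between the center of `p` and any `u ≤ e`, the mass of the opposite color exceeds twice the
sparsity level by no more than the mass of the color of `p` in the left half of `p`, up to the
discretization error `η`. -/
def ControlsRight (Φ : ℝ → ℝ) (δ η : ℝ) (p : MarkedInterval) (e : ℝ) : Prop :=
  ∀ u ∈ Icc p.center e, colorMass Φ (!p.color) u - colorMass Φ (!p.color) p.center ≤
    2 * δ * (u - p.center) + (colorMass Φ p.color p.center - colorMass Φ p.color p.left) + η

/-- The mirror image of `ControlsRight`. -/
def ControlsLeft (Φ : ℝ → ℝ) (δ η : ℝ) (p : MarkedInterval) (e : ℝ) : Prop :=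
  ∀ u ∈ Icc e p.center, colorMass Φ (!p.color) p.center - colorMass Φ (!p.color) u ≤
    2 * δ * (p.center - u) + (colorMass Φ p.color p.right - colorMass Φ p.color p.center) + η

/-- The invariant of a greedy covering of `[p.center, t]` by intervals inside `p` that are sparse
for the opposite color: they cover `[s, e]`, with multiplicity at most two on `[s, t]`, where the
density of that color is at most `2δ / (1 + δ)`, and with multiplicity one on `[t, e]`. -/
def Reaches (Φ : ℝ → ℝ) (δ : ℝ) (p : MarkedInterval) (t : ℝ) : Prop :=
  ∃ s ∈ Icc p.left p.center, ∃ e ∈ Icc t p.right,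
    (1 + δ) * (colorMass Φ (!p.color) t - colorMass Φ (!p.color) s) +
      (colorMass Φ (!p.color) e - colorMass Φ (!p.color) t) ≤ 2 * δ * (t - s) + δ * (e - t)

/-- The state of `p` after a chain of smaller intervals of the opposite color, ending in `q`, has
been shown to lie close to its center. -/
structure Absorbs (Φ : ℝ → ℝ) (δ η : ℝ) (p q : MarkedInterval) : Prop where
  controlsRight : p.ControlsRight Φ δ η q.right
  reaches : ∀ t ∈ Ioc p.center q.right, p.Reaches Φ δ t

/-- The relation between consecutive intervals of a crossing: the centers are close, and where the
color changes, the smaller interval controls the gap between them. -/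
structure Linked (Φ : ℝ → ℝ) (δ η : ℝ) (p q : MarkedInterval) : Prop where
  center_le : p.center ≤ q.center
  sub_le_left : q.center - p.center ≤ reach δ * p.radius
  sub_le_right : q.center - p.center ≤ reach δ * q.radius
  controls : p.color ≠ q.color →
    (q.radius ≤ p.radius ∧ q.ControlsLeft Φ δ η p.center) ∨
    (p.radius ≤ q.radius ∧ p.ControlsRight Φ δ η q.center)

lemma left_lt_center (p : MarkedInterval) : p.left < p.center := sub_lt_self _ p.radius_pos

lemma center_lt_right (p : MarkedInterval) : p.center < p.right :=
  lt_add_of_pos_right _ p.radius_pos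

lemma ControlsRight.mono {e e' : ℝ} (h : p.ControlsRight Φ δ η e) (he : e' ≤ e) :
    p.ControlsRight Φ δ η e' :=
  fun u hu => h u ⟨hu.1, hu.2.trans he⟩

lemma ControlsRight.of_controlsLeft (hΦ : IsMassFunction Φ) (hδ : 0 < δ)
    (hcubic : 4 * δ ^ 3 + 2 * δ ^ 2 + 3 * δ < 1) (hpq : p.Dominates Φ δ q)
    (hlink : Linked Φ δ η p q) (hctl : q.ControlsLeft Φ δ η p.center) :
    p.ControlsRight Φ δ η q.center := by
  intro u ⟨hu, hu'⟩
  obtain ⟨hq, hcolor, hrad⟩ := hpq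
  have hctl := hctl u ⟨hu, hu'⟩
  simp only [IsSparse, hcolor, colorMass_not, left, right, Bool.not_not] at hq hctl ⊢
  have hM := hΦ.colorMass p.color
  have hgap := hlink.sub_le_right
  have hgap' : reach δ * q.radius ≤ q.radius :=
    mul_le_of_le_one_left q.radius_pos.le (reach_lt_one hδ hcubic).le
  have hmass := hM.monotone (show p.center - p.radius ≤ q.center - q.radius by linarith)
  have hδ₃ := lt_one_third_of_cubic hδ hcubic
  have hu_center : 2 * δ * (q.center - p.center) ≤ (1 - 2 * δ) * q.radius := by
    have hslack := mul_pos (slack_pos hδ hcubic) q.radius_pos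
    rw [slack] at hslack
    linarith [mul_le_mul_of_nonneg_left hgap (show 0 ≤ 2 * δ by positivity)]
  have hu_end : (1 - 2 * δ) * (q.center - p.center) ≤ (1 - 2 * δ) * q.radius :=
    mul_le_mul_of_nonneg_left (by linarith) (by linarith)
  -- The left side is affine in `u`, so the bounds at the two ends of the gap suffice.
  have hu_between :
      2 * δ * (q.center - u) + (1 - 2 * δ) * (u - p.center) ≤ (1 - 2 * δ) * q.radius := by
    rcases le_total (2 * δ) (1 - 2 * δ) with h | h <;> nlinarith
  linarith

lemma ControlsRight.extend (hΦ : IsMassFunction Φ) (hδ : 0 ≤ δ) (hδ₂ : δ ≤ 1 / 2) (hη : 0 ≤ η)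
    (hpq : p.Dominates Φ δ q) (hcenter : p.center ≤ q.center)
    (hctl : p.ControlsRight Φ δ η q.center) : p.ControlsRight Φ δ η q.right := by
  obtain ⟨hq, hcolor, hrad⟩ := hpq
  intro u ⟨hu, hu'⟩
  rcases le_total u q.center with huq | huq
  · exact hctl u ⟨hu, huq⟩
  have hΨ := hΦ.colorMass (!p.color)
  have hmono := hΨ.monotone hu'
  rw [IsSparse, hcolor] at hq
  have hscale : 2 * δ * q.center ≤ 2 * δ * u := by gcongr
  rcases le_total p.center q.left with hleft | hleft
  · have := hctl q.left ⟨hleft, q.left_lt_center.le⟩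
    have hq_left : q.left = q.center - q.radius := rfl
    nlinarith
  · have hmass := (hΦ.colorMass p.color).monotone
      (show p.left ≤ q.left by simp only [left]; linarith)
    simp only [colorMass_not] at hq hmono ⊢
    have : 0 ≤ (1 - 2 * δ) * (p.center - q.left) := mul_nonneg (by linarith) (by linarith)
    simp only [left] at *
    linarith

lemma right_le_right (hΦ : IsMassFunction Φ) (hδ : 0 ≤ δ) (hδ₂ : δ ≤ 1 / 2) (hη : 0 ≤ η)
    (hηp : η < slack δ * p.radius) (hp : p.IsSparse Φ δ)
    (hpq : p.Dominates Φ δ q) (hcenter : p.center ≤ q.center)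
    (hnear : q.center ≤ p.center + reach δ * p.radius) (hctl : p.ControlsRight Φ δ η q.center) :
    q.right ≤ p.right := by
  by_contra! hlt
  obtain ⟨hq, hcolor, hrad⟩ := hpq
  have hΨ := hΦ.colorMass (!p.color)
  have hmono := hΨ.monotone hlt.le
  have hscale : 2 * δ * (q.center - p.center) ≤ 2 * δ * (reach δ * p.radius) :=
    mul_le_mul_of_nonneg_left (by linarith) (by linarith)
  have hδrad : 2 * δ * q.radius ≤ 2 * δ * p.radius := by gcongr
  rw [IsSparse, hcolor] at hq
  have hq_left : q.left = q.center - q.radius := rfl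
  have hp_left : p.left = p.center - p.radius := rfl
  have hp_right : p.right = p.center + p.radius := rfl
  have hp' : 2 * p.radius - 2 * δ * p.radius <
      colorMass Φ (!p.color) p.right - colorMass Φ (!p.color) p.left := by
    simp only [IsSparse, colorMass_not] at hp ⊢
    linarith
  rw [slack] at hηp
  rcases le_total p.center q.left with hleft | hleft
  · have := hctl q.left ⟨hleft, q.left_lt_center.le⟩
    simp only [colorMass_not] at *
    nlinarith
  · have := hΨ.sub_le_sub (show p.left ≤ q.left by linarith)
    have : 0 ≤ (1 - 2 * δ) * (p.center - q.left) := mul_nonneg (by linarith) (by linarith)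
    nlinarith

lemma Reaches.of_isSparse (hΦ : IsMassFunction Φ) (hδ : 0 ≤ δ) (hδ₁ : δ ≤ 1)
    (hpq : p.Dominates Φ δ q) (hleft : p.left ≤ q.left)
    (hright : q.right ≤ p.right) (hstart : q.left ≤ p.center ∨ p.Reaches Φ δ q.left)
    {t : ℝ} (ht : t ∈ Icc q.left q.right) : p.Reaches Φ δ t := by
  obtain ⟨hq, hcolor, -⟩ := hpq
  have hΨ := hΦ.colorMass (!p.color)
  have hscale : δ * colorMass Φ (!p.color) t - δ * colorMass Φ (!p.color) q.left
      ≤ δ * t - δ * q.left := by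
    simpa only [mul_sub] using mul_le_mul_of_nonneg_left (hΨ.sub_le_sub ht.1) hδ
  rw [IsSparse, hcolor, show 2 * δ * q.radius = δ * (q.right - q.left) by
    simp only [left, right]; ring] at hq
  rcases hstart with hcenter | ⟨s, hs, e, he, hse⟩
  · exact ⟨q.left, ⟨hleft, hcenter⟩, q.right, ⟨ht.2, hright⟩, by linarith⟩
  rcases le_total t e with hte | hte
  · exact ⟨s, hs, e, ⟨hte, he.2⟩, by linarith⟩
  · refine ⟨s, hs, q.right, ⟨ht.2, hright⟩, ?_⟩
    have hoverlap : δ * (colorMass Φ (!p.color) e - colorMass Φ (!p.color) q.left)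
        ≤ colorMass Φ (!p.color) e - colorMass Φ (!p.color) q.left :=
      mul_le_of_le_one_left (sub_nonneg.2 (hΨ.monotone he.1)) hδ₁
    have hrest := mul_le_mul_of_nonneg_left (hΨ.sub_le_sub hte) hδ
    linarith

lemma Reaches.le_center_add (hΦ : IsMassFunction Φ) (hδ : 0 ≤ δ) (hδ₁ : δ < 1)
    (hp : p.IsSparse Φ δ) {t : ℝ} (ht : p.Reaches Φ δ t) :
    t ≤ p.center + reach δ * p.radius := by
  obtain ⟨s, ⟨hs, hs'⟩, e, ⟨he, he'⟩, hse⟩ := ht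
  have hM := hΦ.colorMass p.color
  have hmass_left := hM.monotone hs
  have hmass_right := hM.monotone he'
  have hdensity : (1 + δ) * (colorMass Φ (!p.color) e - colorMass Φ (!p.color) s)
      ≤ 2 * δ * (e - s) := by
    have := mul_le_mul_of_nonneg_left ((hΦ.colorMass (!p.color)).sub_le_sub he) hδ
    linarith
  have hown : colorMass Φ p.color e - colorMass Φ p.color s < 2 * δ * p.radius := by
    rw [IsSparse] at hp
    linarith
  have hlength : (1 - δ) * (e - s) ≤ (1 - δ) * (reach δ * p.radius) := by
    have hscale := mul_le_mul_of_nonneg_left hown.le (show 0 ≤ 1 + δ by linarith)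
    rw [← mul_assoc, mul_comm (1 - δ) (reach δ), reach_mul_one_sub hδ₁]
    simp only [colorMass_not] at hdensity
    linarith
  linarith [le_of_mul_le_mul_left hlength (sub_pos.2 hδ₁)]

lemma Absorbs.of_controlsRight (hΦ : IsMassFunction Φ) (hδ : 0 ≤ δ) (hδ₂ : δ ≤ 1 / 2)
    (hη : 0 ≤ η) (hηp : η < slack δ * p.radius) (hp : p.IsSparse Φ δ)
    (hpq : p.Dominates Φ δ q) (hcenter : p.center ≤ q.center)
    (hnear : q.center ≤ p.center + reach δ * p.radius) (hctl : p.ControlsRight Φ δ η q.center)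
    (hreach : ∀ t ∈ Ioc p.center q.left, p.Reaches Φ δ t) : p.Absorbs Φ δ η q := by
  refine ⟨hctl.extend hΦ hδ hδ₂ hη hpq hcenter, fun t ht => ?_⟩
  rcases le_total t q.left with htq | htq
  · exact hreach t ⟨ht.1, htq⟩
  refine .of_isSparse hΦ hδ (by linarith) hpq
    (by simp only [left]; linarith [hpq.radius_le])
    (right_le_right hΦ hδ hδ₂ hη hηp hp hpq hcenter hnear hctl) ?_ ⟨htq, ht.2⟩
  exact (le_or_gt q.left p.center).imp_right fun h => hreach _ ⟨h, le_rfl⟩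

lemma Absorbs.of_linked (hΦ : IsMassFunction Φ) (hδ : 0 < δ)
    (hcubic : 4 * δ ^ 3 + 2 * δ ^ 2 + 3 * δ < 1) (hη : 0 ≤ η) (hηp : η < slack δ * p.radius)
    (hp : p.IsSparse Φ δ) (hpq : p.Dominates Φ δ q) (hlink : Linked Φ δ η p q)
    (hctl : q.ControlsLeft Φ δ η p.center) : p.Absorbs Φ δ η q := by
  have hδ₃ := lt_one_third_of_cubic hδ hcubic
  have hleft : q.left ≤ p.center := by
    have := mul_le_of_le_one_left q.radius_pos.le (reach_lt_one hδ hcubic).le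
    rw [left]
    linarith [hlink.sub_le_right]
  exact .of_controlsRight hΦ hδ.le (by linarith) hη hηp hp hpq hlink.center_le
    (by linarith [hlink.sub_le_left])
    (.of_controlsLeft hΦ hδ hcubic hpq hlink hctl)
    fun t ht => absurd (ht.1.trans_le ht.2) hleft.not_gt

lemma Absorbs.right_le (h : p.Absorbs Φ δ η q) (hΦ : IsMassFunction Φ) (hδ : 0 ≤ δ) (hδ₁ : δ < 1)
    (hp : p.IsSparse Φ δ) (hcenter : p.center ≤ q.center) :
    q.right ≤ p.center + reach δ * p.radius :=
  (h.reaches _ ⟨hcenter.trans_lt q.center_lt_right, le_rfl⟩).le_center_add hΦ hδ hδ₁ hp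

lemma Linked.center_le_right (h : Linked Φ δ η p q) (hδ : 0 < δ)
    (hcubic : 4 * δ ^ 3 + 2 * δ ^ 2 + 3 * δ < 1) : q.center ≤ p.right := by
  have := mul_le_of_le_one_left p.radius_pos.le (reach_lt_one hδ hcubic).le
  rw [right]
  linarith [h.sub_le_left]

lemma Absorbs.trans_linked (h : p.Absorbs Φ δ η q) (hΦ : IsMassFunction Φ) (hδ : 0 < δ)
    (hcubic : 4 * δ ^ 3 + 2 * δ ^ 2 + 3 * δ < 1) (hη : 0 ≤ η) (hηp : η < slack δ * p.radius)
    (hp : p.IsSparse Φ δ) (hpr : p.Dominates Φ δ r) (hcenter : p.center ≤ q.center)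
    (hlink : Linked Φ δ η q r) : p.Absorbs Φ δ η r := by
  have hδ₃ := lt_one_third_of_cubic hδ hcubic
  have hrq := hlink.center_le_right hδ hcubic
  have hq := h.right_le hΦ hδ.le (by linarith) hp hcenter
  exact .of_controlsRight hΦ hδ.le (by linarith) hη hηp hp hpr
    (hcenter.trans hlink.center_le) (hrq.trans hq) (h.controlsRight.mono hrq)
    fun t ht => h.reaches t ⟨ht.1, ht.2.trans (r.left_lt_center.le.trans hrq)⟩

lemma Absorbs.linked (h : p.Absorbs Φ δ η q) (hΦ : IsMassFunction Φ) (hδ : 0 < δ)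
    (hcubic : 4 * δ ^ 3 + 2 * δ ^ 2 + 3 * δ < 1) (hp : p.IsSparse Φ δ)
    (hcenter : p.center ≤ q.center) (hlink : Linked Φ δ η q r) (hrad : p.radius ≤ r.radius) :
    Linked Φ δ η p r := by
  have hδ₁ : δ < 1 := by linarith [lt_one_third_of_cubic hδ hcubic]
  have hrq := hlink.center_le_right hδ hcubic
  have hrp : r.center - p.center ≤ reach δ * p.radius := by
    linarith [h.right_le hΦ hδ.le hδ₁ hp hcenter]
  exact
    { center_le := hcenter.trans hlink.center_le
      sub_le_left := hrp
      sub_le_right := hrp.trans (mul_le_mul_of_nonneg_left hrad (reach_pos hδ hδ₁).le)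
      controls := fun _ => .inr ⟨hrad, h.controlsRight.mono hrq⟩ }

lemma ControlsLeft.reflect {e : ℝ} (h : p.ControlsLeft Φ δ η e) :
    p.reflect.ControlsRight (reflectMass Φ) δ η (-e) := by
  intro u hu
  have := h (-u) ⟨le_neg.1 hu.2, neg_le.1 hu.1⟩
  simp only [MarkedInterval.reflect, left, right, colorMass_reflectMass, neg_neg, neg_sub,
    sub_neg_eq_add] at this ⊢
  rw [add_comm p.radius]
  linarith

lemma ControlsRight.reflect {e : ℝ} (h : p.ControlsRight Φ δ η e) :
    p.reflect.ControlsLeft (reflectMass Φ) δ η (-e) := by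
  intro u hu
  have := h (-u) ⟨le_neg.1 hu.2, neg_le.1 hu.1⟩
  simp only [MarkedInterval.reflect, left, right, colorMass_reflectMass, neg_neg, neg_add,
    ← sub_eq_add_neg] at this ⊢
  linarith

lemma IsSparse.reflect (h : p.IsSparse Φ δ) : p.reflect.IsSparse (reflectMass Φ) δ := by
  have hleft : -p.reflect.right = p.left := by
    simp only [MarkedInterval.reflect, left, right]
    ring
  have hright : -p.reflect.left = p.right := by
    simp only [MarkedInterval.reflect, left, right]
    ring
  rw [IsSparse] at h ⊢
  rw [colorMass_reflectMass, colorMass_reflectMass, hleft, hright]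
  simp only [MarkedInterval.reflect]
  linarith

lemma Linked.reflect (h : Linked Φ δ η p q) :
    Linked (reflectMass Φ) δ η q.reflect p.reflect where
  center_le := neg_le_neg h.center_le
  sub_le_left := (neg_sub_neg _ _).trans_le h.sub_le_right
  sub_le_right := (neg_sub_neg _ _).trans_le h.sub_le_left
  controls hne := (h.controls hne.symm).symm.imp (fun ⟨hrad, hctl⟩ => ⟨hrad, hctl.reflect⟩)
    fun ⟨hrad, hctl⟩ => ⟨hrad, hctl.reflect⟩

lemma Linked.of_sub_le (hΦ : IsMassFunction Φ) (hδ : 0 ≤ δ) (hcenter : p.center ≤ q.center)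
    (hη : q.center - p.center ≤ η) (hp : q.center - p.center ≤ reach δ * p.radius)
    (hq : q.center - p.center ≤ reach δ * q.radius) : Linked Φ δ η p q where
  center_le := hcenter
  sub_le_left := hp
  sub_le_right := hq
  controls _ := by
    rcases le_total q.radius p.radius with hrad | hrad
    · refine .inl ⟨hrad, fun u hu => ?_⟩
      have := (hΦ.colorMass (!q.color)).sub_le_sub hu.2
      have := (hΦ.colorMass q.color).monotone q.center_lt_right.le
      have := mul_nonneg hδ (sub_nonneg.2 hu.2)
      linarith [hu.1]
    · refine .inr ⟨hrad, fun u hu => ?_⟩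
      have := (hΦ.colorMass (!p.color)).sub_le_sub hu.1
      have := (hΦ.colorMass p.color).monotone p.left_lt_center.le
      have := mul_nonneg hδ (sub_nonneg.2 hu.1)
      linarith [hu.2]

end MarkedInterval

/-- A chain `d 0, …, d n` of linked sparse intervals from one color to the other, none of them
larger than its two end members, whose radius is `B`. -/
structure Crossing (Φ : ℝ → ℝ) (δ η B : ℝ) (n : ℕ) (d : ℕ → MarkedInterval) : Prop where
  isSparse : ∀ i ≤ n, (d i).IsSparse Φ δ
  lt_slack : ∀ i ≤ n, η < slack δ * (d i).radius
  radius_le : ∀ i ≤ n, (d i).radius ≤ B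
  linked : ∀ i < n, (d i).Linked Φ δ η (d (i + 1))
  color_ne : (d 0).color ≠ (d n).color
  radius_zero : (d 0).radius = B
  radius_last : (d n).radius = B

namespace Crossing

variable {Φ : ℝ → ℝ} {δ η B : ℝ} {n : ℕ} {d : ℕ → MarkedInterval}

lemma center_le (h : Crossing Φ δ η B n d) {i j : ℕ} (hij : i ≤ j) (hj : j ≤ n) :
    (d i).center ≤ (d j).center := by
  induction j, hij using Nat.le_induction with
  | base => exact le_rfl
  | succ j _ ih => exact (ih (by lia)).trans (h.linked j (by lia)).center_le

lemma reflect (h : Crossing Φ δ η B n d) :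
    Crossing (reflectMass Φ) δ η B n fun i => (d (n - i)).reflect where
  isSparse i _ := (h.isSparse (n - i) (n.sub_le i)).reflect
  lt_slack i _ := h.lt_slack (n - i) (n.sub_le i)
  radius_le i _ := h.radius_le (n - i) (n.sub_le i)
  linked i hi := by
    have := (h.linked (n - (i + 1)) (by lia)).reflect
    rwa [show n - (i + 1) + 1 = n - i by lia] at this
  color_ne := by simpa [MarkedInterval.reflect] using h.color_ne.symm
  radius_zero := by simpa [MarkedInterval.reflect] using h.radius_last
  radius_last := by simpa [MarkedInterval.reflect] using h.radius_zero

lemma skip (h : Crossing Φ δ η B n d) {j k : ℕ} (hjk : j + k < n)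
    (hlink : (d j).Linked Φ δ η (d (j + k + 1))) :
    Crossing Φ δ η B (n - k) fun i => d (if i ≤ j then i else i + k) where
  isSparse i hi := h.isSparse _ (by split_ifs <;> lia)
  lt_slack i hi := h.lt_slack _ (by split_ifs <;> lia)
  radius_le i hi := h.radius_le _ (by split_ifs <;> lia)
  linked i hi := by
    rcases lt_trichotomy i j with hij | rfl | hij
    · simpa [hij, hij.le] using h.linked i (by lia)
    · simpa [Nat.add_right_comm] using hlink
    · simpa [hij.not_ge, (Nat.lt_succ_of_lt hij).not_ge, Nat.add_right_comm] using
        h.linked (i + k) (by lia)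
  color_ne := by
    simpa [show ¬ n - k ≤ j by lia, show n - k + k = n by lia] using h.color_ne
  radius_zero := by simpa using h.radius_zero
  radius_last := by
    simpa [show ¬ n - k ≤ j by lia, show n - k + k = n by lia] using h.radius_last

lemma absorbs (h : Crossing Φ δ η B n d) (hΦ : IsMassFunction Φ) (hδ : 0 < δ)
    (hcubic : 4 * δ ^ 3 + 2 * δ ^ 2 + 3 * δ < 1) (hη : 0 ≤ η) {j m : ℕ} (hjm : j < m)
    (hm : m ≤ n) (hblock : ∀ i ∈ Ioc j m, (d j).Dominates Φ δ (d i))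
    (hctl : (d (j + 1)).ControlsLeft Φ δ η (d j).center) : (d j).Absorbs Φ δ η (d m) := by
  have hj := h.isSparse j (by lia)
  have hslack := h.lt_slack j (by lia)
  induction m, hjm using Nat.le_induction with
  | base => exact .of_linked hΦ hδ hcubic hη hslack hj (hblock _ (by simp)) (h.linked j hm) hctl
  | succ m hjm ih =>
    have hjm' : j ≤ m := Nat.le_of_succ_le hjm
    have habs := ih (by lia) fun i hi => hblock i ⟨hi.1, Nat.le_succ_of_le hi.2⟩
    exact habs.trans_linked hΦ hδ hcubic hη hslack hj (hblock _ ⟨by lia, le_rfl⟩)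
      (h.center_le hjm' (by lia)) (h.linked m hm)

/-- The last interval is as large as any other one, so it cannot be absorbed. -/
lemma exists_not_dominates (h : Crossing Φ δ η B n d) (hΦ : IsMassFunction Φ) (hδ : 0 < δ)
    (hcubic : 4 * δ ^ 3 + 2 * δ ^ 2 + 3 * δ < 1) (hη : 0 ≤ η) {j : ℕ} (hj : j < n)
    (hctl : (d (j + 1)).ControlsLeft Φ δ η (d j).center) :
    ∃ m ∈ Ioc j n, ¬ (d j).Dominates Φ δ (d m) := by
  by_contra! hblock
  have hδ₃ := lt_one_third_of_cubic hδ hcubic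
  have hcenter := h.center_le hj.le le_rfl
  have hend := (h.absorbs hΦ hδ hcubic hη hj le_rfl hblock hctl).right_le hΦ hδ.le (by linarith)
    (h.isSparse j hj.le) hcenter
  have hreach := mul_lt_of_lt_one_left (d j).radius_pos (reach_lt_one hδ hcubic)
  have hrad := (h.radius_le j hj.le).trans_eq h.radius_last.symm
  rw [MarkedInterval.right] at hend
  linarith

lemma exists_shorter_of_controlsLeft (h : Crossing Φ δ η B n d) (hΦ : IsMassFunction Φ)
    (hδ : 0 < δ) (hcubic : 4 * δ ^ 3 + 2 * δ ^ 2 + 3 * δ < 1) (hη : 0 ≤ η) {j : ℕ} (hj : j < n)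
    (hcolor : (d j).color ≠ (d (j + 1)).color)
    (hmin : ∀ m < n, (d m).color ≠ (d (m + 1)).color →
      (d j).radius ≤ max (d m).radius (d (m + 1)).radius)
    (hrad : (d (j + 1)).radius ≤ (d j).radius)
    (hctl : (d (j + 1)).ControlsLeft Φ δ η (d j).center) :
    ∃ n' < n, ∃ d', Crossing Φ δ η B n' d' := by
  classical
  have hexit := h.exists_not_dominates hΦ hδ hcubic hη hj hctl
  obtain ⟨⟨hjm, hmn⟩, hm⟩ := Nat.find_spec hexit
  have hbefore : ∀ i ∈ Ico (j + 1) (Nat.find hexit), (d j).Dominates Φ δ (d i) := fun i hi =>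
    by_contra fun hnot => Nat.find_min hexit hi.2 ⟨⟨hi.1, hi.2.le.trans hmn⟩, hnot⟩
  generalize Nat.find hexit = m at *
  have hfirst : (d j).Dominates Φ δ (d (j + 1)) :=
    ⟨h.isSparse _ hj, Bool.eq_not.2 hcolor.symm, hrad⟩
  have hm_ne : m ≠ j + 1 := fun heq => hm (heq ▸ hfirst)
  obtain ⟨k, rfl⟩ : ∃ k, m = j + k + 1 := ⟨m - 1 - j, by lia⟩
  have hlast := hbefore (j + k) ⟨by lia, by lia⟩
  have habs := h.absorbs hΦ hδ hcubic hη (m := j + k) (by lia) (by lia)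
    (fun i hi => hbefore i ⟨hi.1, Nat.lt_succ_of_le hi.2⟩) hctl
  have hcenter := h.center_le (Nat.le_add_right j k) (by lia)
  have hlast_lt : (d (j + k)).radius < (d j).radius := by
    have hδ₃ := lt_one_third_of_cubic hδ hcubic
    have hend := habs.right_le hΦ hδ.le (by linarith) (h.isSparse j hj.le) hcenter
    have hreach := mul_lt_of_lt_one_left (d j).radius_pos (reach_lt_one hδ hcubic)
    rw [MarkedInterval.right] at hend
    linarith
  have hnext : (d j).radius ≤ (d (j + k + 1)).radius := by
    by_cases hsame : (d (j + k + 1)).color = (d (j + k)).color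
    · by_contra! hlt
      exact hm ⟨h.isSparse _ hmn, hsame.trans hlast.color_eq, hlt.le⟩
    · exact (le_max_iff.1 (hmin (j + k) hmn (Ne.symm hsame))).resolve_left hlast_lt.not_ge
  exact ⟨n - k, by lia, _, h.skip hmn (habs.linked hΦ hδ hcubic (h.isSparse j hj.le) hcenter
    (h.linked _ hmn) hnext)⟩

lemma exists_color_ne_succ (h : Crossing Φ δ η B n d) :
    ∃ j < n, (d j).color ≠ (d (j + 1)).color := by
  by_contra! hconst
  have hzero : ∀ i ≤ n, (d 0).color = (d i).color := fun i => by
    induction i with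
    | zero => exact fun _ => rfl
    | succ i ih => exact fun hi => (ih (by lia)).trans (hconst i hi)
  exact h.color_ne (hzero n le_rfl)

lemma exists_min_color_change (h : Crossing Φ δ η B n d) :
    ∃ j < n, (d j).color ≠ (d (j + 1)).color ∧ ∀ m < n, (d m).color ≠ (d (m + 1)).color →
      max (d j).radius (d (j + 1)).radius ≤ max (d m).radius (d (m + 1)).radius := by
  obtain ⟨i, hi⟩ := h.exists_color_ne_succ
  obtain ⟨j, ⟨hj, hcolor⟩, hmin⟩ :=
    Set.exists_min_image {m | m < n ∧ (d m).color ≠ (d (m + 1)).color}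
      (fun m => max (d m).radius (d (m + 1)).radius)
      ((Set.finite_lt_nat n).subset fun _ hm => hm.1) ⟨i, hi⟩
  exact ⟨j, hj, hcolor, fun m hm hm' => hmin m ⟨hm, hm'⟩⟩

lemma exists_shorter (h : Crossing Φ δ η B n d) (hΦ : IsMassFunction Φ) (hδ : 0 < δ)
    (hcubic : 4 * δ ^ 3 + 2 * δ ^ 2 + 3 * δ < 1) (hη : 0 ≤ η) :
    ∃ n' < n, ∃ Φ' d', IsMassFunction Φ' ∧ Crossing Φ' δ η B n' d' := by
  obtain ⟨j, hj, hcolor, hmin⟩ := h.exists_min_color_change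
  rcases (h.linked j hj).controls hcolor with ⟨hrad, hctl⟩ | ⟨hrad, hctl⟩
  · obtain ⟨n', hn', d', h'⟩ := h.exists_shorter_of_controlsLeft hΦ hδ hcubic hη hj hcolor
      (fun m hm hm' => (le_max_left _ _).trans (hmin m hm hm')) hrad hctl
    exact ⟨n', hn', Φ, d', hΦ, h'⟩
  · have hj₀ : n - (n - 1 - j) = j + 1 := by lia
    have hj₁ : n - (n - 1 - j + 1) = j := by lia
    have hmin' (m : ℕ) (hm : m < n) (hm' : (d (n - m)).color ≠ (d (n - (m + 1))).color) :
        (d (j + 1)).radius ≤ max (d (n - m)).radius (d (n - (m + 1))).radius := by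
      have := hmin (n - (m + 1)) (by lia)
      rw [show n - (m + 1) + 1 = n - m by lia, max_comm (d (n - (m + 1))).radius] at this
      exact (le_max_right _ _).trans (this hm'.symm)
    have hshort := h.reflect.exists_shorter_of_controlsLeft hΦ.reflectMass hδ hcubic hη
      (j := n - 1 - j) (by lia)
    rw [hj₀, hj₁] at hshort
    obtain ⟨n', hn', d', h'⟩ := hshort hcolor.symm hmin' hrad hctl.reflect
    exact ⟨n', hn', _, d', hΦ.reflectMass, h'⟩

end Crossing

lemma not_crossing {δ η B : ℝ} (hδ : 0 < δ) (hcubic : 4 * δ ^ 3 + 2 * δ ^ 2 + 3 * δ < 1)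
    (hη : 0 ≤ η) {Φ : ℝ → ℝ} (hΦ : IsMassFunction Φ) (n : ℕ) (d : ℕ → MarkedInterval) :
    ¬ Crossing Φ δ η B n d := by
  induction n using Nat.strong_induction_on generalizing Φ d with
  | _ n ih =>
    intro h
    obtain ⟨n', hn', Φ', d', hΦ', h'⟩ := h.exists_shorter hΦ hδ hcubic hη
    exact ih n' hn' hΦ' d' h'

/-- Within every interval centered at `x`, the relative mass of `Φ` lies in `[δ, 1 - δ]`. -/
def IsBalanced (Φ : ℝ → ℝ) (δ x : ℝ) : Prop :=
  ∀ t > 0, (Φ (x + t) - Φ (x - t)) / (2 * t) ∈ Icc δ (1 - δ)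

section Discretization

variable {Φ : ℝ → ℝ} {δ : ℝ}

lemma MarkedInterval.IsSparse.eventually {I : MarkedInterval} (h : I.IsSparse Φ δ)
    (hΦ : IsMassFunction Φ) :
    ∀ᶠ x in 𝓝 I.center, { I with center := x }.IsSparse Φ δ := by
  have := (hΦ.colorMass I.color).continuous
  have hcont : Continuous fun x =>
      colorMass Φ I.color (x + I.radius) - colorMass Φ I.color (x - I.radius) := by fun_prop
  exact hcont.continuousAt.eventually_lt_const h

lemma MarkedInterval.IsSparse.of_right_le {I : MarkedInterval} {α : ℝ} (hδ : 0 < δ)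
    (hα : ∀ t ≤ α, t - Φ t = α - Φ α) (hcolor : I.color = false) (h : I.right ≤ α) :
    I.IsSparse Φ δ := by
  have hrad := I.radius_pos
  rw [IsSparse, hcolor, colorMass, colorMass, hα _ h,
    hα _ (I.left_lt_center.le.trans (I.center_lt_right.le.trans h)), sub_self]
  positivity

lemma MarkedInterval.IsSparse.of_le_left {I : MarkedInterval} {β : ℝ} (hδ : 0 < δ)
    (hβ : ∀ t, β ≤ t → Φ t = Φ β) (hcolor : I.color = true) (h : β ≤ I.left) :
    I.IsSparse Φ δ := by
  have hrad := I.radius_pos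
  rw [IsSparse, hcolor, colorMass, colorMass, hβ _ h,
    hβ _ (h.trans (I.left_lt_center.le.trans I.center_lt_right.le)), sub_self]
  positivity

lemma exists_isSparse_of_not_isBalanced {x : ℝ} (h : ¬ IsBalanced Φ δ x) :
    ∃ I : MarkedInterval, I.center = x ∧ I.IsSparse Φ δ := by
  simp only [IsBalanced, not_forall, mem_Icc, not_and_or, not_le] at h
  obtain ⟨t, ht, h | h⟩ := h
  · refine ⟨⟨x, t, ht, true⟩, rfl, ?_⟩
    rw [div_lt_iff₀ (by positivity)] at h
    simp only [MarkedInterval.IsSparse, MarkedInterval.left, MarkedInterval.right, colorMass]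
    linarith
  · refine ⟨⟨x, t, ht, false⟩, rfl, ?_⟩
    rw [lt_div_iff₀ (by positivity)] at h
    simp only [MarkedInterval.IsSparse, MarkedInterval.left, MarkedInterval.right, colorMass]
    linarith

lemma exists_radius_bounds (hΦ : IsMassFunction Φ)
    (hsparse : ∀ x, ∃ I : MarkedInterval, I.center = x ∧ I.IsSparse Φ δ) {K : Set ℝ}
    (hK : IsCompact K) :
    ∃ ρ > 0, ∃ B, ∀ x ∈ K, ∃ I : MarkedInterval,
      I.center = x ∧ I.IsSparse Φ δ ∧ I.radius ∈ Icc ρ B := by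
  refine hK.induction_on ⟨1, one_pos, 1, by simp⟩ ?_ ?_ ?_
  · rintro s t hst ⟨ρ, hρ, B, h⟩
    exact ⟨ρ, hρ, B, fun x hx => h x (hst hx)⟩
  · rintro s t ⟨ρ, hρ, B, h⟩ ⟨ρ', hρ', B', h'⟩
    refine ⟨min ρ ρ', lt_min hρ hρ', max B B', ?_⟩
    rintro x (hx | hx)
    · obtain ⟨I, hI, hI', hrad⟩ := h x hx
      exact ⟨I, hI, hI', Icc_subset_Icc (min_le_left _ _) (le_max_left _ _) hrad⟩
    · obtain ⟨I, hI, hI', hrad⟩ := h' x hx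
      exact ⟨I, hI, hI', Icc_subset_Icc (min_le_right _ _) (le_max_right _ _) hrad⟩
  · intro x _
    obtain ⟨I, rfl, hI⟩ := hsparse x
    exact ⟨_, mem_nhdsWithin_of_mem_nhds (hI.eventually hΦ), I.radius, I.radius_pos, I.radius,
      fun y hy => ⟨{ I with center := y }, rfl, hy, le_rfl, le_rfl⟩⟩

lemma exists_isSparse_family (hΦ : IsMassFunction Φ) (hδ : 0 < δ) {α β : ℝ} (hαβ : α < β)
    (hα : ∀ t ≤ α, t - Φ t = α - Φ α) (hβ : ∀ t, β ≤ t → Φ t = Φ β)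
    (hsparse : ∀ x, ∃ I : MarkedInterval, I.center = x ∧ I.IsSparse Φ δ) :
    ∃ ρ > 0, ∃ B > 0, ∃ I : ℝ → MarkedInterval,
      (∀ x, (I x).center = x ∧ (I x).IsSparse Φ δ ∧ (I x).radius ∈ Icc ρ B) ∧
      ((I (α - B)).radius = B ∧ (I (α - B)).color = false) ∧
      ((I (β + B)).radius = B ∧ (I (β + B)).color = true) := by
  obtain ⟨ρ, hρ, B₀, hK⟩ :=
    exists_radius_bounds hΦ hsparse (isCompact_Icc (a := α - 1) (b := β + 1))
  obtain ⟨B, hB₀, hB⟩ : ∃ B, B₀ ≤ B ∧ 1 ≤ B := ⟨max B₀ 1, le_max_left _ _, le_max_right _ _⟩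
  have hB_pos : 0 < B := by linarith
  have hrad (s : ℝ) (hs : 1 ≤ s) : min s B ∈ Icc (min ρ 1) B :=
    ⟨(min_le_right _ _).trans (le_min hs hB), min_le_right _ _⟩
  refine ⟨min ρ 1, lt_min hρ one_pos, B, hB_pos, ?_⟩
  suffices h : ∀ x, ∃ I : MarkedInterval,
      (I.center = x ∧ I.IsSparse Φ δ ∧ I.radius ∈ Icc (min ρ 1) B) ∧
      (x = α - B → I.radius = B ∧ I.color = false) ∧
      (x = β + B → I.radius = B ∧ I.color = true) by
    choose I hI hIα hIβ using h
    exact ⟨I, hI, hIα _ rfl, hIβ _ rfl⟩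
  intro x
  rcases le_or_gt x (α - 1) with hxα | hxα
  · refine ⟨⟨x, min (α - x) B, lt_min (by linarith) hB_pos, false⟩,
      ⟨rfl, .of_right_le hδ hα rfl ?_, hrad _ (by linarith)⟩,
      fun hx => ⟨by simp [hx], rfl⟩, fun hx => by linarith⟩
    rw [MarkedInterval.right]
    linarith [min_le_left (α - x) B]
  rcases le_or_gt (β + 1) x with hxβ | hxβ
  · refine ⟨⟨x, min (x - β) B, lt_min (by linarith) hB_pos, true⟩,
      ⟨rfl, .of_le_left hδ hβ rfl ?_, hrad _ (by linarith)⟩,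
      fun hx => by linarith, fun hx => ⟨by simp [hx], rfl⟩⟩
    rw [MarkedInterval.left]
    linarith [min_le_left (x - β) B]
  · obtain ⟨I, hcenter, hI, hI_rad⟩ := hK x ⟨hxα.le, hxβ.le⟩
    exact ⟨I, ⟨hcenter, hI, Icc_subset_Icc (min_le_left _ _) hB₀ hI_rad⟩,
      fun hx => by linarith, fun hx => by linarith⟩

lemma exists_crossing (hΦ : IsMassFunction Φ) (hδ : 0 < δ)
    (hcubic : 4 * δ ^ 3 + 2 * δ ^ 2 + 3 * δ < 1) {a b ρ B : ℝ} (hab : a ≤ b) (hρ : 0 < ρ)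
    {I : ℝ → MarkedInterval}
    (hI : ∀ x, (I x).center = x ∧ (I x).IsSparse Φ δ ∧ (I x).radius ∈ Icc ρ B)
    (hcolor : (I a).color ≠ (I b).color) (ha : (I a).radius = B) (hb : (I b).radius = B) :
    ∃ η ≥ 0, ∃ n d, Crossing Φ δ η B n d := by
  have hreach := reach_pos hδ (by linarith [lt_one_third_of_cubic hδ hcubic])
  have hslack : 0 < slack δ * ρ := mul_pos (slack_pos hδ hcubic) hρ
  have hslack_le (x : ℝ) : slack δ * ρ ≤ slack δ * (I x).radius :=
    mul_le_mul_of_nonneg_left (hI x).2.2.1 (slack_pos hδ hcubic).le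
  have hreach_le (x : ℝ) : reach δ * ρ ≤ reach δ * (I x).radius :=
    mul_le_mul_of_nonneg_left (hI x).2.2.1 hreach.le
  have hmesh : 0 < min (slack δ * ρ / 2) (reach δ * ρ) := by positivity
  obtain ⟨n, hn⟩ := exists_nat_gt ((b - a) / min (slack δ * ρ / 2) (reach δ * ρ))
  have hn₀ : (0 : ℝ) < n := (div_nonneg (sub_nonneg.2 hab) hmesh.le).trans_lt hn
  obtain ⟨hh_slack, hh_reach⟩ := le_min_iff.1 ((div_lt_comm₀ hmesh hn₀).1 hn).le
  have hh : 0 ≤ (b - a) / n := div_nonneg (sub_nonneg.2 hab) hn₀.le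
  have hstep (i : ℕ) : (I (a + ↑(i + 1) * ((b - a) / n))).center -
      (I (a + i * ((b - a) / n))).center = (b - a) / n := by
    rw [(hI _).1, (hI _).1]
    push_cast
    ring
  have hzero : a + ↑(0 : ℕ) * ((b - a) / n) = a := by simp
  have hlast : a + n * ((b - a) / n) = b := by
    rw [mul_div_cancel₀ _ hn₀.ne', add_sub_cancel]
  exact ⟨slack δ * ρ / 2, by positivity, n, fun i => I (a + i * ((b - a) / n)),
    { isSparse := fun _ _ => (hI _).2.1
      lt_slack := fun _ _ => (half_lt_self hslack).trans_le (hslack_le _)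
      radius_le := fun _ _ => (hI _).2.2.2
      linked := fun i _ => .of_sub_le hΦ hδ.le (by linarith [hstep i]) (by linarith [hstep i])
        (by linarith [hstep i, hreach_le (a + i * ((b - a) / n))])
        (by linarith [hstep i, hreach_le (a + ↑(i + 1) * ((b - a) / n))])
      color_ne := by rwa [hzero, hlast]
      radius_zero := by rwa [hzero]
      radius_last := by rwa [hlast] }⟩

lemma exists_isBalanced (hΦ : IsMassFunction Φ) (hδ : 0 < δ)
    (hcubic : 4 * δ ^ 3 + 2 * δ ^ 2 + 3 * δ < 1) {α β : ℝ} (hαβ : α < β)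
    (hα : ∀ t ≤ α, t - Φ t = α - Φ α) (hβ : ∀ t, β ≤ t → Φ t = Φ β) :
    ∃ x, IsBalanced Φ δ x := by
  by_contra! hne
  obtain ⟨ρ, hρ, B, hB, I, hI, ⟨hradα, hcolα⟩, hradβ, hcolβ⟩ :=
    exists_isSparse_family hΦ hδ hαβ hα hβ fun x => exists_isSparse_of_not_isBalanced (hne x)
  obtain ⟨η, hη, n, d, h⟩ := exists_crossing hΦ hδ hcubic (by linarith : α - B ≤ β + B) hρ hI
    (by simp [hcolα, hcolβ]) hradα hradβ
  exact not_crossing hδ hcubic hη hΦ n d h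

end Discretization

section RelativeMeasure

variable {S T : Set ℝ} {δ p t : ℝ}

/-- The distribution function of `S`, normalized to vanish at `0`. -/
noncomputable def massFunction (S : Set ℝ) (t : ℝ) : ℝ :=
  ∫ x in (0 : ℝ)..t, S.indicator 1 x

lemma massFunction_sub (hS : MeasurableSet S) {a b : ℝ} (hab : a ≤ b) :
    massFunction S b - massFunction S a = volume.real (S ∩ Ioo a b) := by
  have hint (a b : ℝ) : IntervalIntegrable (S.indicator (1 : ℝ → ℝ)) volume a b :=
    intervalIntegrable_iff.2
      ((integrableOn_const (C := (1 : ℝ)) measure_Ioc_lt_top.ne).indicator hS)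
  rw [massFunction, massFunction,
    intervalIntegral.integral_interval_sub_left (hint _ _) (hint _ _),
    intervalIntegral.integral_of_le hab, integral_Ioc_eq_integral_Ioo, integral_indicator_one hS,
    measureReal_restrict_apply hS]

lemma relMeasure_eq_massFunction (hS : MeasurableSet S) (ht : 0 < t) :
    relMeasure S p t = (massFunction S (p + t) - massFunction S (p - t)) / (2 * t) := by
  rw [massFunction_sub hS (by linarith)]
  rfl

lemma massFunction_sub_add_compl (hS : MeasurableSet S) {a b : ℝ} (hab : a ≤ b) :
    massFunction S b - massFunction S a + (massFunction Sᶜ b - massFunction Sᶜ a) = b - a := by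
  rw [massFunction_sub hS hab, massFunction_sub hS.compl hab, inter_comm, inter_comm Sᶜ,
    ← sdiff_eq, measureReal_inter_add_sdiff hS measure_Ioo_lt_top.ne,
    Real.volume_real_Ioo_of_le hab]

lemma relMeasure_compl (hS : MeasurableSet S) (ht : 0 < t) :
    relMeasure Sᶜ p t = 1 - relMeasure S p t := by
  have := massFunction_sub_add_compl hS (show p - t ≤ p + t by linarith)
  rw [relMeasure_eq_massFunction hS ht, relMeasure_eq_massFunction hS.compl ht]
  field_simp
  linarith

lemma relMeasure_empty : relMeasure ∅ p t = 0 := by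
  simp [relMeasure]

lemma relMeasure_nonneg (ht : 0 ≤ t) : 0 ≤ relMeasure S p t :=
  div_nonneg ENNReal.toReal_nonneg (by positivity)

lemma relMeasure_mem_Icc (hS : MeasurableSet S) (ht : 0 < t) : relMeasure S p t ∈ Icc 0 1 := by
  have hcompl : 0 ≤ relMeasure Sᶜ p t := relMeasure_nonneg ht.le
  rw [relMeasure_compl hS ht, sub_nonneg] at hcompl
  exact ⟨relMeasure_nonneg ht.le, hcompl⟩

lemma isMassFunction_massFunction (hS : MeasurableSet S) : IsMassFunction (massFunction S) where
  monotone a b hab := by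
    rw [← sub_nonneg, massFunction_sub hS hab]
    exact measureReal_nonneg
  monotone_id_sub a b hab := by
    have hcompl := massFunction_sub hS.compl hab
    have := massFunction_sub_add_compl hS hab
    have : 0 ≤ volume.real (Sᶜ ∩ Ioo a b) := measureReal_nonneg
    linarith

lemma exists_forall_relMeasure_mem_Icc (hδ : 0 < δ)
    (hcubic : 4 * δ ^ 3 + 2 * δ ^ 2 + 3 * δ < 1) (hS : MeasurableSet S) {a b : ℝ} (hab : a < b)
    (ha : Iic a ⊆ S) (hb : S ⊆ Iic b) : ∃ p, ∀ t > 0, relMeasure S p t ∈ Icc δ (1 - δ) := by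
  have hleft : ∀ t ≤ a, t - massFunction S t = a - massFunction S a := fun t ht => by
    have hfull : S ∩ Ioo t a = Ioo t a := inter_eq_right.2 fun x hx => ha hx.2.le
    have := massFunction_sub hS ht
    rw [hfull, Real.volume_real_Ioo_of_le ht] at this
    linarith
  have hright : ∀ t, b ≤ t → massFunction S t = massFunction S b := fun t ht => by
    have hempty : S ∩ Ioo b t = ∅ :=
      eq_empty_of_forall_notMem fun x hx => hx.2.1.not_ge (hb hx.1)
    have := massFunction_sub hS ht
    rwa [hempty, measureReal_empty, sub_eq_zero] at this
  obtain ⟨p, hp⟩ := exists_isBalanced (isMassFunction_massFunction hS) hδ hcubic hab hleft hright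
  exact ⟨p, fun t ht => relMeasure_eq_massFunction hS ht ▸ hp t ht⟩

lemma eventually_relMeasure_le (h : S ≤ᶠ[𝓝 p] T) :
    ∀ᶠ t in 𝓝[>] 0, relMeasure S p t ≤ relMeasure T p t := by
  obtain ⟨ε, hε, hST⟩ := Metric.eventually_nhds_iff_ball.1 h
  filter_upwards [Ioo_mem_nhdsGT hε] with t ⟨ht, htε⟩
  refine div_le_div_of_nonneg_right (measureReal_mono ?_ ?_) (by positivity)
  · rintro x ⟨hxS, hx⟩
    rw [← Real.ball_eq_Ioo] at hx
    exact ⟨hST x (Metric.ball_subset_ball htε.le hx) hxS, Real.ball_eq_Ioo p t ▸ hx⟩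
  · exact measure_ne_top_of_subset inter_subset_right measure_Ioo_lt_top.ne

lemma isExceptionalPoint_of_eventually (hS : MeasurableSet S)
    (h : ∀ᶠ t in 𝓝[>] 0, relMeasure S p t ∈ Icc δ (1 - δ)) : IsExceptionalPoint S δ p := by
  have hbdd : ∀ᶠ t in 𝓝[>] (0 : ℝ), relMeasure S p t ∈ Icc 0 1 :=
    eventually_mem_nhdsWithin.mono fun t ht => relMeasure_mem_Icc hS ht
  exact ⟨le_liminf_of_le (isBoundedUnder_of_eventually_le
      (hbdd.mono fun t ht => ht.2)).isCoboundedUnder_ge (h.mono fun t ht => ht.1),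
    limsup_le_of_le (isBoundedUnder_of_eventually_ge
      (hbdd.mono fun t ht => ht.1)).isCoboundedUnder_le (h.mono fun t ht => ht.2)⟩

lemma exists_eventually_lt_relMeasure (hS : volume S ≠ 0) {c : ℝ} (hc : c < 1) :
    ∃ a, ∀ᶠ t in 𝓝[>] 0, c < relMeasure S a t := by
  have : (ae (volume.restrict S)).NeBot := by simpa using hS
  obtain ⟨a, ha⟩ := (Besicovitch.ae_tendsto_measure_inter_div volume S).exists
  have ha := (ENNReal.tendsto_toReal ENNReal.one_ne_top).comp ha
  refine ⟨a, (ha.eventually_const_lt hc).mp ?_⟩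
  filter_upwards [self_mem_nhdsWithin] with t (ht : 0 < t) hlt
  have hIoo : volume (S ∩ Ioo (a - t) (a + t)) = volume (S ∩ Icc (a - t) (a + t)) :=
    measure_congr ((ae_eq_refl _).inter Ioo_ae_eq_Icc)
  rw [Function.comp_apply, Real.closedBall_eq_Icc, ENNReal.toReal_div, Real.volume_Icc,
    ENNReal.toReal_ofReal (by linarith), ← hIoo, show a + t - (a - t) = 2 * t by ring] at hlt
  exact hlt

lemma eventually_lt_relMeasure {a c : ℝ} (hc : c < 1)
    (ha : ∀ᶠ t in 𝓝[>] 0, c < relMeasure S a t) (hST : S ≤ᶠ[𝓝 a] T) (hT : p ≠ a → T ∈ 𝓝 p) :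
    ∀ᶠ t in 𝓝[>] 0, c < relMeasure T p t := by
  rcases eq_or_ne p a with rfl | hpa
  · filter_upwards [ha, eventually_relMeasure_le hST] with t using lt_of_lt_of_le
  · have huniv : univ ≤ᶠ[𝓝 p] T := mem_of_superset (hT hpa) fun x hx _ => hx
    filter_upwards [eventually_relMeasure_le huniv, self_mem_nhdsWithin] with t hle (ht : 0 < t)
    rw [← compl_empty, relMeasure_compl .empty ht, relMeasure_empty, sub_zero] at hle
    exact hc.trans_le hle

/-- Being exceptional is a local property, so `S` may be replaced outside `(a, b)`. -/
lemma exists_eventually_relMeasure_mem_Icc (hδ : 0 < δ)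
    (hcubic : 4 * δ ^ 3 + 2 * δ ^ 2 + 3 * δ < 1) (hS : MeasurableSet S) {a b : ℝ} (hab : a < b)
    (ha : ∀ᶠ t in 𝓝[>] 0, 1 - δ < relMeasure S a t)
    (hb : ∀ᶠ t in 𝓝[>] 0, 1 - δ < relMeasure Sᶜ b t) :
    ∃ p, ∀ᶠ t in 𝓝[>] 0, relMeasure S p t ∈ Icc δ (1 - δ) := by
  set T := Iic a ∪ S ∩ Iic b
  have hT : MeasurableSet T := measurableSet_Iic.union (hS.inter measurableSet_Iic)
  have hTa : Iic a ⊆ T := subset_union_left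
  have hTb : T ⊆ Iic b := union_subset (Iic_subset_Iic.2 hab.le) inter_subset_right
  have hTb' : Ioi b ⊆ Tᶜ := fun x (hx : b < x) hxT => hx.not_ge (hTb hxT)
  have hST {x : ℝ} (hx : x < b) : S ≤ᶠ[𝓝 x] T := by
    filter_upwards [Iio_mem_nhds hx] with y (hy : y < b) hyS using .inr ⟨hyS, hy.le⟩
  have hTS {x : ℝ} (hx : a < x) : T ≤ᶠ[𝓝 x] S := by
    filter_upwards [Ioi_mem_nhds hx] with y hy hyT using
      (hyT.resolve_left (mem_Iic.not.2 (not_le.2 hy))).1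
  obtain ⟨p, hp⟩ := exists_forall_relMeasure_mem_Icc hδ hcubic hT hab hTa hTb
  have hap : a < p := by
    by_contra! hpa
    have hdense := eventually_lt_relMeasure (sub_lt_self 1 hδ) ha (hST hab) fun hne =>
      mem_of_superset (Iic_mem_nhds (hpa.lt_of_ne hne)) hTa
    obtain ⟨t, hlt, ht⟩ := (hdense.and self_mem_nhdsWithin).exists
    exact hlt.not_ge (hp t ht).2
  have hpb : p < b := by
    by_contra! hpb
    have hdense := eventually_lt_relMeasure (sub_lt_self 1 hδ) hb
      (hTS hab).compl fun hne =>
        mem_of_superset (Ioi_mem_nhds (hpb.lt_of_ne' hne)) hTb'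
    obtain ⟨t, hlt, ht⟩ := (hdense.and self_mem_nhdsWithin).exists
    rw [relMeasure_compl hT ht] at hlt
    linarith [(hp t ht).1]
  refine ⟨p, ?_⟩
  filter_upwards [eventually_relMeasure_le (hST hpb), eventually_relMeasure_le (hTS hap),
    self_mem_nhdsWithin] with t hle hge ht
  exact ⟨(hp t ht).1.trans hge, hle.trans (hp t ht).2⟩

end RelativeMeasure

/-- If `0 ≤ δ` and `4δ³ + 2δ² + 3δ < 1`, then every nontrivial measurable set `S ⊆ ℝ`
has a `δ`-exceptional point. -/
theorem exists_exceptional_point (δ : ℝ) (hδ : 0 ≤ δ)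
    (hcubic : 4 * δ ^ 3 + 2 * δ ^ 2 + 3 * δ < 1)
    (S : Set ℝ) (hS : MeasurableSet S) (hnt : NontrivialSet S) :
    ∃ p : ℝ, IsExceptionalPoint S δ p := by
  suffices h : ∃ p, ∀ᶠ t in 𝓝[>] 0, relMeasure S p t ∈ Icc δ (1 - δ) from
    h.imp fun p hp => isExceptionalPoint_of_eventually hS hp
  rcases hδ.eq_or_lt with rfl | hδ
  · refine ⟨0, eventually_mem_nhdsWithin.mono fun t ht => ?_⟩
    simpa using relMeasure_mem_Icc hS ht
  obtain ⟨a, ha⟩ := exists_eventually_lt_relMeasure hnt.1.ne' (sub_lt_self 1 hδ)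
  obtain ⟨b, hb⟩ := exists_eventually_lt_relMeasure hnt.2.ne' (sub_lt_self 1 hδ)
  rcases lt_trichotomy a b with hab | rfl | hba
  · exact exists_eventually_relMeasure_mem_Icc hδ hcubic hS hab ha hb
  · obtain ⟨t, ⟨ha, hb⟩, ht⟩ := ((ha.and hb).and self_mem_nhdsWithin).exists
    rw [relMeasure_compl hS ht] at hb
    linarith [lt_one_third_of_cubic hδ hcubic]
  · obtain ⟨p, hp⟩ := exists_eventually_relMeasure_mem_Icc hδ hcubic hS.compl hba hb
      (by rwa [compl_compl])
    refine ⟨p, (hp.and self_mem_nhdsWithin).mono fun t ⟨h, ht⟩ => ?_⟩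
    rw [relMeasure_compl hS ht, mem_Icc] at h
    constructor <;> linarith [h.1, h.2]
end

section
/- Let 0 ≤ δ < 1/2 and suppose S ⊆ ℝ is a nontrivial measurable set having no δ-exceptional point. Then for every τ > 0 there exists a configuration C such that for every endpoint c of C there is a radius ω > 0 with λ(C|I_ω(c)) ∉ [δ+τ, 1−δ−τ]. -/
open MeasureTheory Set Filter

/-- A configuration: a finite increasing sequence `0 < a 0 < b 0 < a 1 < ⋯ < a (r-1) < b (r-1)`
of positive reals. -/
structure Config where
  r : ℕ
  hr : 0 < r
  a : Fin r → ℝ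
  b : Fin r → ℝ
  ha : ∀ i, 0 < a i
  hab : ∀ i, a i < b i
  hba : ∀ i j : Fin r, i < j → b i < a j

/-- The set `C = (-∞,0) ∪ ⋃ i (a i, b i)` associated to a configuration. -/
def Config.carrier (C : Config) : Set ℝ := Iio 0 ∪ ⋃ i, Ioo (C.a i) (C.b i)

/-- The endpoints of a configuration: `0` together with all the `a i` and `b i`. -/
def Config.endpoints (C : Config) : Set ℝ := insert 0 (range C.a ∪ range C.b)

/-!
Choose a density point `x` of `S` and a density point `y` of its complement, and carry them to `0`
and `L = |x - y|` by a translation or a reflection of the line. Filling up `(-∞, 0)` and emptying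
`[L, ∞)` only raises the relative measures at `0` and lowers those at `L`, so every `p ∈ [0, L]` has
a radius at which the relative measure of the modified set lies outside `[δ + τ/2, 1 - δ - τ/2]`. By
compactness these radii can be chosen to be at least a single `ω₀ > 0`. A configuration with
endpoints in `[0, L]` that differs from the modified set by measure less than `τ ω₀ / 2` then has
relative measures within `τ / 2` of it at all radii `ω ≥ ω₀`. To find one, take the cells of a fine
grid that meet a compact subset carrying most of the measure, and shrink them slightly.
-/

open scoped Topology symmDiff ENNReal

section RelMeasure

variable {S T : Set ℝ} {p ω : ℝ}

lemma measure_inter_Ioo_ne_top (S : Set ℝ) (a b : ℝ) : volume (S ∩ Ioo a b) ≠ ∞ :=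
  measure_ne_top_of_subset inter_subset_right measure_Ioo_lt_top.ne

lemma relMeasure_mono (hω : 0 ≤ ω) (h : S ∩ Ioo (p - ω) (p + ω) ⊆ T) :
    relMeasure S p ω ≤ relMeasure T p ω :=
  div_le_div_of_nonneg_right
    (measureReal_mono (subset_inter h inter_subset_right) (measure_inter_Ioo_ne_top T _ _))
    (by positivity)

lemma relMeasure_le_add_symmDiff (hω : 0 ≤ ω) (h : volume (S ∆ T) ≠ ∞) :
    relMeasure S p ω ≤ relMeasure T p ω + volume.real (S ∆ T) / (2 * ω) := by
  have hsub : S ∩ Ioo (p - ω) (p + ω) ⊆ T ∩ Ioo (p - ω) (p + ω) ∪ S ∆ T := fun x hx =>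
    (em (x ∈ T)).imp (fun hT => ⟨hT, hx.2⟩) (fun hT => Or.inl ⟨hx.1, hT⟩)
  rw [relMeasure, relMeasure, ← add_div]
  refine div_le_div_of_nonneg_right ?_ (by positivity)
  exact (measureReal_mono hsub (measure_union_ne_top (measure_inter_Ioo_ne_top T _ _) h)).trans
    (measureReal_union_le _ _)

lemma abs_relMeasure_sub_le_symmDiff (hω : 0 ≤ ω) (h : volume (S ∆ T) ≠ ∞) :
    |relMeasure S p ω - relMeasure T p ω| ≤ volume.real (S ∆ T) / (2 * ω) := by
  rw [abs_sub_le_iff, sub_le_iff_le_add', sub_le_iff_le_add']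
  refine ⟨relMeasure_le_add_symmDiff hω h, ?_⟩
  rw [symmDiff_comm] at h ⊢
  exact relMeasure_le_add_symmDiff hω h

lemma relMeasure_preimage {f : ℝ → ℝ} (hf : Isometry f) (hfv : MeasurePreserving f)
    (hS : MeasurableSet S) (p ω : ℝ) : relMeasure (f ⁻¹' S) p ω = relMeasure S (f p) ω := by
  rw [relMeasure, relMeasure, ← Real.ball_eq_Ioo, ← Real.ball_eq_Ioo, ← hf.preimage_ball,
    ← preimage_inter, hfv.measure_preimage (hS.inter measurableSet_ball).nullMeasurableSet]

lemma exists_isometry_measurePreserving (x y : ℝ) :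
    ∃ f : ℝ → ℝ, Isometry f ∧ MeasurePreserving f ∧ f 0 = x ∧ f (dist x y) = y := by
  rcases le_total x y with h | h
  · refine ⟨fun t => x + t, isometry_add_left x, measurePreserving_add_left volume x,
      add_zero x, ?_⟩
    rw [dist_comm, Real.dist_eq, abs_of_nonneg (sub_nonneg.2 h)]
    exact add_sub_cancel x y
  · refine ⟨fun t => x - t, (IsometryEquiv.subLeft x).isometry,
      Measure.measurePreserving_sub_left volume x, sub_zero x, ?_⟩
    rw [Real.dist_eq, abs_of_nonneg (sub_nonneg.2 h)]
    exact sub_sub_cancel x y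

lemma continuous_measureReal_Ioo (μ : Measure ℝ) [IsLocallyFiniteMeasure μ] [NullSingletonClass μ]
    (ω : ℝ) : Continuous fun p => μ.real (Ioo (p - ω) (p + ω)) := by
  rcases le_total ω 0 with hω | hω
  · simpa [Ioo_eq_empty_of_le, show ∀ p : ℝ, p + ω ≤ p - ω from fun p => by linarith]
      using continuous_const
  have hprim : Continuous fun t => ∫ _ in (0 : ℝ)..t, (1 : ℝ) ∂μ :=
    intervalIntegral.continuous_primitive (fun _ _ => intervalIntegrable_const) 0
  have heq (p : ℝ) : μ.real (Ioo (p - ω) (p + ω)) =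
      (∫ _ in (0 : ℝ)..p + ω, (1 : ℝ) ∂μ) - ∫ _ in (0 : ℝ)..p - ω, (1 : ℝ) ∂μ := by
    rw [intervalIntegral.integral_interval_sub_left intervalIntegrable_const
      intervalIntegrable_const, intervalIntegral.integral_of_le (by linarith),
      setIntegral_const, smul_eq_mul, mul_one, measureReal_congr Ioo_ae_eq_Ioc]
  simp only [heq]
  exact (hprim.comp (continuous_add_const ω)).sub (hprim.comp (continuous_sub_right ω))

lemma continuous_relMeasure (H : Set ℝ) (ω : ℝ) : Continuous fun p => relMeasure H p ω := by
  have h (p : ℝ) : relMeasure H p ω =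
      (volume.restrict H).real (Ioo (p - ω) (p + ω)) / (2 * ω) := by
    rw [measureReal_restrict_apply measurableSet_Ioo, inter_comm]; rfl
  simpa only [h] using (continuous_measureReal_Ioo (volume.restrict H) ω).div_const _

lemma relMeasure_eq_toReal_div_closedBall (hω : 0 ≤ ω) :
    relMeasure S p ω =
      (volume (S ∩ Metric.closedBall p ω) / volume (Metric.closedBall p ω)).toReal := by
  rw [ENNReal.toReal_div, Real.volume_closedBall, ENNReal.toReal_ofReal (by positivity),
    Real.closedBall_eq_Icc, ← measure_congr ((ae_eq_refl S).inter Ioo_ae_eq_Icc)]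
  rfl

lemma ae_tendsto_relMeasure (hS : MeasurableSet S) :
    ∀ᵐ x, Tendsto (relMeasure S x) (𝓝[>] 0) (𝓝 (S.indicator 1 x)) := by
  filter_upwards [Besicovitch.ae_tendsto_measure_inter_div_of_measurableSet volume hS] with x hx
  have hind : (S.indicator (1 : ℝ → ℝ≥0∞) x).toReal = S.indicator 1 x := by
    by_cases h : x ∈ S <;> simp [h]
  rw [← hind]
  refine ((ENNReal.tendsto_toReal ?_).comp hx).congr' ?_
  · by_cases h : x ∈ S <;> simp [h]
  · filter_upwards [self_mem_nhdsWithin] with ω hω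
    exact (relMeasure_eq_toReal_div_closedBall (le_of_lt hω)).symm

lemma exists_mem_tendsto_relMeasure_one (hS : MeasurableSet S) (h : 0 < volume S) :
    ∃ x ∈ S, Tendsto (relMeasure S x) (𝓝[>] 0) (𝓝 1) := by
  obtain ⟨x, hxS, hx⟩ :=
    ((frequently_ae_mem_iff.2 h.ne').and_eventually (ae_tendsto_relMeasure hS)).exists
  exact ⟨x, hxS, by simpa [hxS] using hx⟩

lemma exists_notMem_tendsto_relMeasure_zero (hS : MeasurableSet S) (h : 0 < volume Sᶜ) :
    ∃ x ∉ S, Tendsto (relMeasure S x) (𝓝[>] 0) (𝓝 0) := by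
  obtain ⟨x, hxS, hx⟩ :=
    ((frequently_ae_mem_iff.2 h.ne').and_eventually (ae_tendsto_relMeasure hS)).exists
  exact ⟨x, hxS, by simpa [notMem_of_mem_compl hxS] using hx⟩

end RelMeasure

/-- The relative measure of `H` in `I_ω(p)` misses the balanced range `[κ, 1 - κ]`; in the paper's
notation, `λ(H | I_ω(p)) ∉ [κ, 1 - κ]`. -/
def IsUnbalanced (H : Set ℝ) (κ p ω : ℝ) : Prop := relMeasure H p ω ∉ Icc κ (1 - κ)

section IsUnbalanced

variable {H H' S T : Set ℝ} {κ η p ω L : ℝ}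

lemma IsUnbalanced.of_abs_relMeasure_sub_le (h : IsUnbalanced H κ p ω)
    (hη : |relMeasure H' p ω - relMeasure H p ω| ≤ η) : IsUnbalanced H' (κ + η) p ω := by
  rw [abs_sub_le_iff] at hη
  exact fun hmem => h ⟨by linarith [hmem.1], by linarith [hmem.2]⟩

lemma IsUnbalanced.add (h : IsUnbalanced H κ p ω) (hη : 0 ≤ η) : IsUnbalanced H (κ + η) p ω :=
  h.of_abs_relMeasure_sub_le (by simpa using hη)

lemma isOpen_setOf_isUnbalanced (H : Set ℝ) (κ ω : ℝ) : IsOpen {p | IsUnbalanced H κ p ω} :=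
  isClosed_Icc.isOpen_compl.preimage (continuous_relMeasure H ω)

lemma frequently_isUnbalanced_of_not_isExceptionalPoint (h : ¬ IsExceptionalPoint S κ p) :
    ∃ᶠ ω in 𝓝[>] 0, IsUnbalanced S κ p ω := by
  refine fun hbal => h ?_
  have hge : ∀ᶠ ω in 𝓝[>] 0, κ ≤ relMeasure S p ω := hbal.mono fun _ hω => (not_not.1 hω).1
  have hle : ∀ᶠ ω in 𝓝[>] 0, relMeasure S p ω ≤ 1 - κ := hbal.mono fun _ hω => (not_not.1 hω).2
  exact ⟨le_liminf_of_le (isBoundedUnder_of_eventually_le hle).isCoboundedUnder_ge hge,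
    limsup_le_of_le (isBoundedUnder_of_eventually_ge hge).isCoboundedUnder_le hle⟩

/-- The set that fills up `(-∞, 0)`, agrees with `T` on `[0, L)` and is empty beyond. It has the
shape of a configuration, except that its part in `[0, L)` is an arbitrary set. -/
def truncation (T : Set ℝ) (L : ℝ) : Set ℝ := Iio 0 ∪ T ∩ Ico 0 L

lemma inter_Ioo_subset_truncation (h : p + ω ≤ L) :
    T ∩ Ioo (p - ω) (p + ω) ⊆ truncation T L := fun z hz =>
  (lt_or_ge z 0).imp id fun hz0 => ⟨hz.1, hz0, hz.2.2.trans_le h⟩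

lemma truncation_inter_Ioo_subset (h : 0 ≤ p - ω) :
    truncation T L ∩ Ioo (p - ω) (p + ω) ⊆ T := by
  rintro z ⟨hz | hz, hpz, -⟩
  · exact absurd (h.trans_lt hpz) (not_lt.2 (le_of_lt hz))
  · exact hz.1

lemma exists_isUnbalanced_truncation_zero (hκ : 0 < κ) (hL : 0 < L)
    (hT : Tendsto (relMeasure T 0) (𝓝[>] 0) (𝓝 1)) :
    ∃ ω > 0, IsUnbalanced (truncation T L) κ 0 ω := by
  obtain ⟨ω, hlt, hω, hωL⟩ :=
    ((hT.eventually_const_lt (sub_lt_self 1 hκ)).and (Ioo_mem_nhdsGT hL)).exists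
  refine ⟨ω, hω, fun hmem => ?_⟩
  have := relMeasure_mono hω.le (inter_Ioo_subset_truncation (T := T) (p := 0)
    ((zero_add ω).trans_le hωL.le))
  exact absurd hmem.2 (not_le.2 (hlt.trans_le this))

lemma exists_isUnbalanced_truncation_right (hκ : 0 < κ) (hL : 0 < L)
    (hT : Tendsto (relMeasure T L) (𝓝[>] 0) (𝓝 0)) :
    ∃ ω > 0, IsUnbalanced (truncation T L) κ L ω := by
  obtain ⟨ω, hlt, hω, hωL⟩ :=
    ((hT.eventually_lt_const hκ).and (Ioo_mem_nhdsGT hL)).exists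
  refine ⟨ω, hω, fun hmem => ?_⟩
  have := relMeasure_mono hω.le (truncation_inter_Ioo_subset (T := T) (L := L)
    (sub_nonneg.2 hωL.le))
  exact absurd hmem.1 (not_le.2 (this.trans_lt hlt))

lemma exists_isUnbalanced_truncation_of_mem_Ioo (hp : p ∈ Ioo 0 L)
    (hT : ∃ᶠ ω in 𝓝[>] 0, IsUnbalanced T κ p ω) :
    ∃ ω > 0, IsUnbalanced (truncation T L) κ p ω := by
  obtain ⟨ω, hunb, hω, hωp⟩ := (hT.and_eventually
    (Ioo_mem_nhdsGT (lt_min hp.1 (sub_pos.2 hp.2)))).exists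
  obtain ⟨hωp, hωL⟩ := lt_min_iff.1 hωp
  have heq : relMeasure (truncation T L) p ω = relMeasure T p ω :=
    (relMeasure_mono hω.le (truncation_inter_Ioo_subset (sub_nonneg.2 hωp.le))).antisymm
      (relMeasure_mono hω.le (inter_Ioo_subset_truncation (by linarith)))
  exact ⟨ω, hω, by rwa [IsUnbalanced, heq]⟩

lemma exists_isUnbalanced_truncation (hκ : 0 < κ) (hL : 0 < L)
    (h0 : Tendsto (relMeasure T 0) (𝓝[>] 0) (𝓝 1))
    (h1 : Tendsto (relMeasure T L) (𝓝[>] 0) (𝓝 0))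
    (hT : ∀ p, ∃ᶠ ω in 𝓝[>] 0, IsUnbalanced T κ p ω) (hp : p ∈ Icc 0 L) :
    ∃ ω > 0, IsUnbalanced (truncation T L) κ p ω := by
  rcases eq_endpoints_or_mem_Ioo_of_mem_Icc hp with rfl | rfl | hp
  · exact exists_isUnbalanced_truncation_zero hκ hL h0
  · exact exists_isUnbalanced_truncation_right hκ hL h1
  · exact exists_isUnbalanced_truncation_of_mem_Ioo hp (hT p)

end IsUnbalanced

lemma exists_pos_forall_exists_ge_of_isCompact {X : Type*} [TopologicalSpace X] {K : Set X}
    (hK : IsCompact K) {P : X → ℝ → Prop} (hopen : ∀ ω, IsOpen {x | P x ω})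
    (h : ∀ x ∈ K, ∃ ω > 0, P x ω) : ∃ ω₀ > 0, ∀ x ∈ K, ∃ ω ≥ ω₀, P x ω := by
  obtain ⟨⟨ω₀, hω₀⟩, hcover⟩ := hK.elim_directed_cover
    (fun ω₀ : Ioi (0 : ℝ) => ⋃ ω ≥ (ω₀ : ℝ), {x | P x ω})
    (fun _ => isOpen_biUnion fun ω _ => hopen ω)
    (fun x hx => by
      obtain ⟨ω, hω, hP⟩ := h x hx
      exact mem_iUnion.2 ⟨⟨ω, hω⟩, mem_iUnion₂.2 ⟨ω, le_rfl, hP⟩⟩)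
    (Antitone.directed_le fun _ _ hle =>
      iUnion₂_mono' fun ω hω => ⟨ω, le_trans hle hω, subset_rfl⟩)
  exact ⟨ω₀, hω₀, fun x hx => by simpa using hcover hx⟩

lemma exists_pos_measure_symmDiff_biUnion_lt {X : Type*} [MetricSpace X]
    [ProperSpace X] [MeasurableSpace X] [BorelSpace X] {μ : Measure X}
    [μ.InnerRegularCompactLTTop] [IsFiniteMeasureOnCompacts μ] {A : Set X}
    (hA : MeasurableSet A) (hμA : μ A ≠ ∞) {ε : ℝ≥0∞} (hε : ε ≠ 0) :
    ∃ r > 0, ∀ {ι : Type*} (P : ι → Set X), A ⊆ ⋃ i, P i →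
      (∀ i, ∀ x ∈ P i, ∀ y ∈ P i, dist x y ≤ r) → ∃ J : Set ι, μ (A ∆ ⋃ i ∈ J, P i) < ε := by
  obtain ⟨K, hKA, hK, hAK⟩ := hA.exists_isCompact_sdiff_lt hμA (ENNReal.half_pos hε).ne'
  have hthick : ∀ᶠ r in 𝓝[>] (0 : ℝ), μ (Metric.cthickening r K) < μ K + ε / 2 :=
    ((tendsto_measure_cthickening_of_isCompact hK).mono_left nhdsWithin_le_nhds).eventually_lt_const
      (ENNReal.lt_add_right hK.measure_ne_top (ENNReal.half_pos hε).ne')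
  obtain ⟨r, hrK, hr⟩ := (hthick.and self_mem_nhdsWithin).exists
  refine ⟨r, hr, fun P hAP hdist => ⟨{i | (P i ∩ K).Nonempty}, ?_⟩⟩
  have hKP : K ⊆ ⋃ i ∈ {i | (P i ∩ K).Nonempty}, P i := fun x hx =>
    let ⟨i, hi⟩ := mem_iUnion.1 (hAP (hKA hx))
    mem_biUnion (show (P i ∩ K).Nonempty from ⟨x, hi, hx⟩) hi
  have hPK : ⋃ i ∈ {i | (P i ∩ K).Nonempty}, P i ⊆ Metric.cthickening r K :=
    iUnion₂_subset fun i ⟨y, hyi, hyK⟩ x hx =>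
      Metric.mem_cthickening_of_dist_le x y r K hyK (hdist i x hx y hyi)
  calc μ (A ∆ ⋃ i ∈ {i | (P i ∩ K).Nonempty}, P i)
      ≤ μ (A \ K ∪ Metric.cthickening r K \ K) :=
        measure_mono (union_subset_union (sdiff_subset_sdiff_right hKP)
          (sdiff_subset_sdiff hPK hKA))
    _ ≤ μ (A \ K) + μ (Metric.cthickening r K \ K) := measure_union_le _ _
    _ < ε / 2 + ε / 2 := ENNReal.add_lt_add hAK (measure_sdiff_lt_of_lt_add
        hK.measurableSet.nullMeasurableSet (Metric.self_subset_cthickening K)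
        hK.measure_ne_top hrK)
    _ = ε := ENNReal.add_halves ε

lemma Ico_subset_iUnion_Ico_mul {N : ℕ} {h : ℝ} (hh : 0 < h) :
    Ico 0 (N * h) ⊆ ⋃ i : Fin N, Ico (i * h) ((i + 1) * h) := fun x hx => by
  have hfloor : ⌊x / h⌋₊ < N :=
    (Nat.floor_lt (div_nonneg hx.1 hh.le)).2 ((div_lt_iff₀ hh).2 hx.2)
  exact mem_iUnion.2 ⟨⟨⌊x / h⌋₊, hfloor⟩,
    (le_div_iff₀ hh).1 (Nat.floor_le (div_nonneg hx.1 hh.le)),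
    (div_lt_iff₀ hh).1 (Nat.lt_floor_add_one _)⟩

lemma exists_grid_volume_symmDiff_lt {A : Set ℝ} (hA : MeasurableSet A) {L : ℝ} (hL : 0 < L)
    (hAL : A ⊆ Ico 0 L) {ε : ℝ≥0∞} (hε : ε ≠ 0) :
    ∃ N : ℕ, 0 < N ∧ ∃ h > 0, N * h = L ∧ ∃ J : Set (Fin N),
      volume (A ∆ ⋃ i ∈ J, Ico (i * h) ((i + 1) * h)) < ε := by
  obtain ⟨r, hr, happrox⟩ := exists_pos_measure_symmDiff_biUnion_lt (μ := volume) hA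
    (measure_ne_top_of_subset hAL measure_Ico_lt_top.ne) hε
  obtain ⟨N, hNr⟩ := exists_nat_gt (L / r)
  have hN : (0 : ℝ) < N := (div_pos hL hr).trans hNr
  have hh : 0 < L / N := div_pos hL hN
  have hhr : L / N ≤ r := (div_lt_comm₀ hr hN).1 hNr |>.le
  have hNh : N * (L / N) = L := mul_div_cancel₀ L hN.ne'
  refine ⟨N, Nat.cast_pos.1 hN, L / N, hh, hNh, happrox _ ?_ fun i x hx y hy => ?_⟩
  · exact hAL.trans ((congrArg (Ico 0) hNh).superset.trans (Ico_subset_iUnion_Ico_mul hh))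
  · exact (Real.dist_le_of_mem_Icc ⟨hx.1, hx.2.le⟩ ⟨hy.1, hy.2.le⟩).trans (by linarith)

namespace Config

open Classical in
/-- The configuration on `N` grid cells of length `h` whose interval in the `i`-th cell nearly
fills the cell if `i ∈ J` and is negligibly short otherwise. The margins of relative size `θ` keep
the closures of the intervals disjoint. -/
noncomputable def ofGrid {N : ℕ} (hN : 0 < N) {h θ : ℝ} (hh : 0 < h) (hθ : θ ∈ Ioo 0 (1 / 3))
    (J : Set (Fin N)) : Config where
  r := N
  hr := hN
  a i := (i + θ) * h
  b i := (i + if i ∈ J then 1 - θ else 2 * θ) * h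
  ha i := mul_pos (by linarith [hθ.1, (i : ℕ).cast_nonneg (α := ℝ)]) hh
  hab i := by
    gcongr
    split_ifs <;> linarith [hθ.1, hθ.2]
  hba i j hij := by
    have hij' : (i : ℝ) + 1 ≤ j := mod_cast hij
    refine mul_lt_mul_of_pos_right ?_ hh
    split_ifs <;> linarith [hθ.1, hθ.2]

variable {N : ℕ} {hN : 0 < N} {h θ : ℝ} {hh : 0 < h} {hθ : θ ∈ Ioo 0 (1 / 3)} {J : Set (Fin N)}

lemma endpoints_ofGrid_subset : (ofGrid hN hh hθ J).endpoints ⊆ Icc 0 (N * h) := by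
  set C := ofGrid hN hh hθ J
  have hbN (i : Fin N) : C.b i ≤ N * h := by
    have hi : (i : ℝ) + 1 ≤ N := mod_cast i.2
    refine mul_le_mul_of_nonneg_right (le_trans ?_ hi) hh.le
    split_ifs <;> linarith [hθ.1, hθ.2]
  rintro c (rfl | ⟨i, rfl⟩ | ⟨i, rfl⟩)
  · exact ⟨le_rfl, by positivity⟩
  · exact ⟨(C.ha i).le, (C.hab i).le.trans (hbN i)⟩
  · exact ⟨((C.ha i).trans (C.hab i)).le, hbN i⟩

lemma volume_Ioo_ofGrid_symmDiff_le (i : Fin N) :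
    volume (Ioo ((ofGrid hN hh hθ J).a i) ((ofGrid hN hh hθ J).b i) ∆
      ⋃ _ : i ∈ J, Ico (i * h) ((i + 1) * h)) ≤ ENNReal.ofReal (2 * θ * h) := by
  have hθh : 0 < θ * h := mul_pos hθ.1 hh
  by_cases hi : i ∈ J
  · have hsub : Ioo ((i + θ) * h) ((i + (1 - θ)) * h) ⊆ Ico (i * h) ((i + 1) * h) :=
      Ioo_subset_Ioo (by linarith) (by linarith) |>.trans Ioo_subset_Ico_self
    simp only [ofGrid, hi, if_true, iUnion_true]
    rw [symmDiff_of_le hsub, measure_sdiff hsub nullMeasurableSet_Ioo measure_Ioo_lt_top.ne,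
      Real.volume_Ico, Real.volume_Ioo, ← ENNReal.ofReal_sub _ (by nlinarith [hθ.2])]
    exact ENNReal.ofReal_le_ofReal (by linarith)
  · simp only [ofGrid, hi, if_false, iUnion_false, ← bot_eq_empty, symmDiff_bot]
    rw [Real.volume_Ioo]
    exact ENNReal.ofReal_le_ofReal (by linarith)

lemma volume_carrier_ofGrid_symmDiff_le :
    volume ((ofGrid hN hh hθ J).carrier ∆ (Iio 0 ∪ ⋃ i ∈ J, Ico (i * h) ((i + 1) * h))) ≤
      ENNReal.ofReal (2 * θ * (N * h)) := by
  set C := ofGrid hN hh hθ J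
  calc volume (C.carrier ∆ (Iio 0 ∪ ⋃ i ∈ J, Ico (i * h) ((i + 1) * h)))
      ≤ volume (⋃ i : Fin N, Ioo (C.a i) (C.b i) ∆ ⋃ _ : i ∈ J, Ico (i * h) ((i + 1) * h)) := by
        refine measure_mono (union_symmDiff_union_subset.trans ?_)
        rw [symmDiff_self, bot_eq_empty, empty_union]
        exact iUnion_symmDiff_iUnion_subset
    _ ≤ ∑ _i : Fin N, ENNReal.ofReal (2 * θ * h) :=
        (measure_iUnion_fintype_le _ _).trans
          (Finset.sum_le_sum fun i _ => volume_Ioo_ofGrid_symmDiff_le i)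
    _ = ENNReal.ofReal (2 * θ * (N * h)) := by
        rw [Finset.sum_const, Finset.card_univ, Fintype.card_fin, ← ENNReal.ofReal_nsmul,
          nsmul_eq_mul, mul_left_comm]

lemma exists_volume_carrier_symmDiff_grid_le (hN : 0 < N) (hh : 0 < h) (J : Set (Fin N)) {ε : ℝ}
    (hε : 0 < ε) : ∃ C : Config, C.endpoints ⊆ Icc 0 (N * h) ∧
      volume (C.carrier ∆ (Iio 0 ∪ ⋃ i ∈ J, Ico (i * h) ((i + 1) * h))) ≤ ENNReal.ofReal ε := by
  have hL : 0 < 2 * (N * h) := by positivity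
  obtain ⟨θ, hθ0, hθ⟩ := exists_between (lt_min (by norm_num : (0 : ℝ) < 1 / 3) (div_pos hε hL))
  obtain ⟨hθ3, hθε⟩ := lt_min_iff.1 hθ
  refine ⟨ofGrid hN hh ⟨hθ0, hθ3⟩ J, endpoints_ofGrid_subset,
    volume_carrier_ofGrid_symmDiff_le.trans (ENNReal.ofReal_le_ofReal ?_)⟩
  linarith [(lt_div_iff₀ hL).1 hθε]

lemma exists_volume_carrier_symmDiff_lt {A : Set ℝ} (hA : MeasurableSet A) {L : ℝ} (hL : 0 < L)
    (hAL : A ⊆ Ico 0 L) {ε : ℝ} (hε : 0 < ε) :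
    ∃ C : Config, C.endpoints ⊆ Icc 0 L ∧
      volume (C.carrier ∆ (Iio 0 ∪ A)) < ENNReal.ofReal ε := by
  obtain ⟨N, hN, h, hh, rfl, J, hJ⟩ := exists_grid_volume_symmDiff_lt hA hL hAL
    (ENNReal.ofReal_pos.2 (half_pos hε)).ne'
  obtain ⟨C, hCL, hC⟩ := exists_volume_carrier_symmDiff_grid_le hN hh J (half_pos hε)
  set G := ⋃ i ∈ J, Ico (i * h) ((i + 1) * h)
  have hGA : (Iio 0 ∪ G) ∆ (Iio 0 ∪ A) ⊆ A ∆ G := by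
    refine union_symmDiff_union_subset.trans ?_
    rw [symmDiff_self, bot_eq_empty, empty_union, symmDiff_comm]
  refine ⟨C, hCL, ?_⟩
  calc volume (C.carrier ∆ (Iio 0 ∪ A))
      ≤ volume (C.carrier ∆ (Iio 0 ∪ G)) + volume ((Iio 0 ∪ G) ∆ (Iio 0 ∪ A)) :=
        measure_symmDiff_le _ _ _
    _ < ENNReal.ofReal (ε / 2) + ENNReal.ofReal (ε / 2) :=
        ENNReal.add_lt_add_of_le_of_lt (ne_top_of_le_ne_top ENNReal.ofReal_ne_top hC) hC
          ((measure_mono hGA).trans_lt hJ)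
    _ = ENNReal.ofReal ε := by
        rw [← ENNReal.ofReal_add (half_pos hε).le (half_pos hε).le, add_halves]

lemma exists_forall_endpoints_isUnbalanced {T : Set ℝ} (hT : MeasurableSet T) {L : ℝ} (hL : 0 < L)
    {κ η : ℝ} (hη : 0 < η)
    (h : ∀ p ∈ Icc 0 L, ∃ ω > 0, IsUnbalanced (truncation T L) κ p ω) :
    ∃ C : Config, ∀ c ∈ C.endpoints, ∃ ω > 0, IsUnbalanced C.carrier (κ + η) c ω := by
  obtain ⟨ω₀, hω₀, hunif⟩ := exists_pos_forall_exists_ge_of_isCompact isCompact_Icc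
    (isOpen_setOf_isUnbalanced (truncation T L) κ) h
  have hηω₀ : 0 < η * ω₀ := mul_pos hη hω₀
  obtain ⟨C, hCL, hC⟩ := exists_volume_carrier_symmDiff_lt (hT.inter measurableSet_Ico) hL
    inter_subset_right hηω₀
  refine ⟨C, fun c hc => ?_⟩
  obtain ⟨ω, hω, hunb⟩ := hunif c (hCL hc)
  have hωpos : 0 < ω := hω₀.trans_le hω
  refine ⟨ω, hωpos, hunb.of_abs_relMeasure_sub_le ?_⟩
  calc |relMeasure C.carrier c ω - relMeasure (truncation T L) c ω|
      ≤ volume.real (C.carrier ∆ truncation T L) / (2 * ω) :=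
        abs_relMeasure_sub_le_symmDiff hωpos.le hC.ne_top
    _ ≤ η * ω₀ / (2 * ω) := by
        gcongr; exact ENNReal.toReal_le_of_le_ofReal hηω₀.le hC.le
    _ ≤ η := by
        rw [div_le_iff₀ (by positivity)]; gcongr; linarith

end Config

/-- If `0 ≤ δ < 1/2` and `S` is a nontrivial measurable set with no `δ`-exceptional point,
then for every `τ > 0` there is a configuration `C` such that every endpoint `c` of `C`
admits a radius `ω > 0` with `λ(C | I_ω(c)) ∉ [δ+τ, 1-δ-τ]`. -/
theorem exists_counterexample_config_of_no_exceptional_point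
    (δ : ℝ) (hδ0 : 0 ≤ δ) (hδ1 : δ < 1 / 2)
    (S : Set ℝ) (hS : MeasurableSet S) (hnt : NontrivialSet S)
    (hno : ∀ p : ℝ, ¬ IsExceptionalPoint S δ p)
    (τ : ℝ) (hτ : 0 < τ) :
    ∃ C : Config, ∀ c ∈ C.endpoints, ∃ ω > 0,
      relMeasure C.carrier c ω ∉ Icc (δ + τ) (1 - δ - τ) := by
  obtain ⟨x, hxS, hx⟩ := exists_mem_tendsto_relMeasure_one hS hnt.1
  obtain ⟨y, hyS, hy⟩ := exists_notMem_tendsto_relMeasure_zero hS hnt.2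
  have hxy : 0 < dist x y := dist_pos.2 (ne_of_mem_of_not_mem hxS hyS)
  obtain ⟨f, hf, hfv, hf0, hfL⟩ := exists_isometry_measurePreserving x y
  have hrel (p : ℝ) : relMeasure (f ⁻¹' S) p = relMeasure S (f p) :=
    funext fun ω => relMeasure_preimage hf hfv hS p ω
  have hunb (p : ℝ) : ∃ᶠ ω in 𝓝[>] 0, IsUnbalanced (f ⁻¹' S) (δ + τ / 2) p ω := by
    simp only [IsUnbalanced, hrel]
    exact (frequently_isUnbalanced_of_not_isExceptionalPoint (hno (f p))).mono
      fun ω hω => hω.add (half_pos hτ).le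
  obtain ⟨C, hC⟩ := Config.exists_forall_endpoints_isUnbalanced (hfv.measurable hS) hxy
    (half_pos hτ) fun p hp => exists_isUnbalanced_truncation (by positivity) hxy
      (by rwa [hrel, hf0]) (by rwa [hrel, hfL]) hunb hp
  refine ⟨C, fun c hc => ?_⟩
  simpa only [IsUnbalanced, add_assoc, add_halves, sub_sub] using hC c hc
end
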